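/- Two simple graphs g and h on [n] have equal additive SBM sufficient statistics (equal block degree sums Σ_{v∈B_i} deg(v) for every block B_i) if and only if g can be transformed into h by a finite sequence of moves, each of which is either (a) a single-edge swap replacing an edge {u,v} by an edge {y,w} with z(u)=z(y), z(v)=z(w), or (b) a 4-cycle exchange replacing edges {u,v},{y,w} by {u,y},{v,w} (which preserves all node degrees), such that every intermediate graph is simple. -/

import Mathlib

/-- Number of nodes assigned to block `i`. -/
noncomputable def blockSize {n k : ℕ} (z : Fin n → Fin k) (i : Fin k) : ℕ := {v | z v = i}.ncard

/-- Additive SBM sufficient statistic: total degree of the nodes in block `i`. -/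
noncomputable def addStat {n k : ℕ} (z : Fin n → Fin k) (g : SimpleGraph (Fin n)) (i : Fin k) : ℕ :=
  ∑ v ∈ Finset.univ.filter (fun v => z v = i), (g.neighborSet v).ncard

/-- A move for the additive SBM: either a single-edge swap within the same pair of blocks,
or a degree-preserving 4-cycle exchange. -/
def addStep {n k : ℕ} (z : Fin n → Fin k) (g h : SimpleGraph (Fin n)) : Prop :=
  (∃ u v y w : Fin n, g.Adj u v ∧ ¬ g.Adj y w ∧ y ≠ w ∧ z u = z y ∧ z v = z w ∧
    h = SimpleGraph.fromEdgeSet ((g.edgeSet \ {s(u, v)}) ∪ {s(y, w)})) ∨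
  (∃ u v y w : Fin n, [u, v, y, w].Pairwise (· ≠ ·) ∧
    g.Adj u v ∧ g.Adj y w ∧ ¬ g.Adj u y ∧ ¬ g.Adj v w ∧
    h = SimpleGraph.fromEdgeSet ((g.edgeSet \ {s(u, v), s(y, w)}) ∪ {s(u, y), s(v, w)}))

open Classical in
/-- Degree of `a` inside the vertex set `T`, as an integer. -/
noncomputable def dgT {n : ℕ} (g : SimpleGraph (Fin n)) (T : Finset (Fin n)) (a : Fin n) : ℤ :=
  ∑ b ∈ T, if g.Adj a b then 1 else 0

theorem addStat_eq_dgT {n k : ℕ} (z : Fin n → Fin k) (g : SimpleGraph (Fin n)) (i : Fin k) :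
    (addStat z g i : ℤ) = ∑ v ∈ Finset.univ.filter (fun v => z v = i), dgT g Finset.univ v := by
  classical
  unfold addStat dgT
  push_cast
  refine Finset.sum_congr rfl fun v _ => ?_
  rw [Set.ncard_eq_toFinset_card', Finset.sum_boole]
  congr 2
  ext b
  simp

theorem sum_ind_pair {n : ℕ} (a u v : Fin n) (huv : u ≠ v) :
    (∑ b, if s(a, b) = s(u, v) then (1 : ℤ) else 0)
      = (if a = u then 1 else 0) + (if a = v then 1 else 0) := by
  have : ∀ b, (if s(a, b) = s(u, v) then (1 : ℤ) else 0)
      = (if b = v then (if a = u then 1 else 0) else 0)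
        + (if b = u then (if a = v then 1 else 0) else 0) := by
    intro b
    simp only [Sym2.eq_iff]
    grind
  simp only [this, Finset.sum_add_distrib, Finset.sum_ite_eq', Finset.mem_univ, if_true]

theorem swap_adj {n : ℕ} (g : SimpleGraph (Fin n)) (u v y w a b : Fin n) :
    (SimpleGraph.fromEdgeSet ((g.edgeSet \ {s(u, v)}) ∪ {s(y, w)})).Adj a b ↔
      ((g.Adj a b ∧ s(a, b) ≠ s(u, v)) ∨ s(a, b) = s(y, w)) ∧ a ≠ b := by
  simp only [SimpleGraph.fromEdgeSet_adj, Set.mem_union, Set.mem_sdiff,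
    Set.mem_singleton_iff, SimpleGraph.mem_edgeSet, ne_eq]

theorem exch_adj {n : ℕ} (g : SimpleGraph (Fin n)) (u v y w a b : Fin n) :
    (SimpleGraph.fromEdgeSet ((g.edgeSet \ {s(u, v), s(y, w)}) ∪ {s(u, y), s(v, w)})).Adj a b ↔
      ((g.Adj a b ∧ s(a, b) ≠ s(u, v) ∧ s(a, b) ≠ s(y, w)) ∨ s(a, b) = s(u, y) ∨ s(a, b) = s(v, w))
        ∧ a ≠ b := by
  simp only [SimpleGraph.fromEdgeSet_adj, Set.mem_union, Set.mem_sdiff, Set.mem_insert_iff,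
    Set.mem_singleton_iff, SimpleGraph.mem_edgeSet, not_or]

theorem dg_swap {n : ℕ} (g : SimpleGraph (Fin n)) (u v y w a : Fin n)
    (h1 : g.Adj u v) (h2 : ¬ g.Adj y w) (h3 : y ≠ w) :
    dgT (SimpleGraph.fromEdgeSet ((g.edgeSet \ {s(u, v)}) ∪ {s(y, w)})) Finset.univ a
      = dgT g Finset.univ a - ((if a = u then 1 else 0) + (if a = v then 1 else 0))
        + ((if a = y then 1 else 0) + (if a = w then 1 else 0)) := by
  classical
  rw [← sum_ind_pair a u v h1.ne, ← sum_ind_pair a y w h3]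
  unfold dgT
  rw [← Finset.sum_sub_distrib, ← Finset.sum_add_distrib]
  refine Finset.sum_congr rfl fun b _ => ?_
  simp only [swap_adj, ne_eq, Sym2.eq_iff]
  have := h1.symm
  have h2' : ¬ g.Adj w y := fun h => h2 h.symm
  have := h1.ne
  have := g.irrefl (v := a)
  grind

theorem dg_exch {n : ℕ} (g : SimpleGraph (Fin n)) (u v y w a : Fin n)
    (hd : [u, v, y, w].Pairwise (· ≠ ·))
    (h1 : g.Adj u v) (h2 : g.Adj y w) (h3 : ¬ g.Adj u y) (h4 : ¬ g.Adj v w) :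
    dgT (SimpleGraph.fromEdgeSet ((g.edgeSet \ {s(u, v), s(y, w)}) ∪ {s(u, y), s(v, w)}))
      Finset.univ a = dgT g Finset.univ a := by
  classical
  simp at hd
  obtain ⟨⟨a1, a2, a3⟩, ⟨a4, a5⟩, a6⟩ := hd
  have key : dgT (SimpleGraph.fromEdgeSet ((g.edgeSet \ {s(u, v), s(y, w)}) ∪ {s(u, y), s(v, w)}))
      Finset.univ a = dgT g Finset.univ a
        - ((if a = u then 1 else 0) + (if a = v then 1 else 0))
        - ((if a = y then 1 else 0) + (if a = w then 1 else 0))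
        + ((if a = u then 1 else 0) + (if a = y then 1 else 0))
        + ((if a = v then 1 else 0) + (if a = w then 1 else 0)) := by
    rw [← sum_ind_pair a u v a1, ← sum_ind_pair a y w a6, ← sum_ind_pair a u y a2,
      ← sum_ind_pair a v w a5]
    unfold dgT
    rw [← Finset.sum_sub_distrib, ← Finset.sum_sub_distrib, ← Finset.sum_add_distrib,
      ← Finset.sum_add_distrib]
    refine Finset.sum_congr rfl fun b _ => ?_
    simp only [exch_adj, ne_eq, Sym2.eq_iff]
    have := h1.symm
    have := h2.symm
    have h3' : ¬ g.Adj y u := fun h => h3 h.symm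
    have h4' : ¬ g.Adj w v := fun h => h4 h.symm
    have := g.irrefl (v := a)
    grind
  rw [key]; ring

theorem addStep_stat {n k : ℕ} (z : Fin n → Fin k) (g h : SimpleGraph (Fin n))
    (hs : addStep z g h) (i : Fin k) : addStat z g i = addStat z h i := by
  have : (addStat z g i : ℤ) = addStat z h i := by
    rw [addStat_eq_dgT, addStat_eq_dgT]
    rcases hs with ⟨u, v, y, w, h1, h2, h3, h4, h5, rfl⟩ | ⟨u, v, y, w, hd, h1, h2, h3, h4, rfl⟩
    · simp only [dg_swap g u v y w _ h1 h2 h3, Finset.sum_add_distrib, Finset.sum_sub_distrib,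
        Finset.sum_ite_eq', Finset.mem_filter, Finset.mem_univ, true_and, h4, h5]
      ring
    · exact Finset.sum_congr rfl fun a _ => (dg_exch g u v y w a hd h1 h2 h3 h4).symm
  exact_mod_cast this

theorem addStep_symm {n k : ℕ} (z : Fin n → Fin k) :
    ∀ {g h : SimpleGraph (Fin n)}, addStep z g h → addStep z h g := by
  rintro g h (⟨u, v, y, w, h1, h2, h3, h4, h5, rfl⟩ | ⟨u, v, y, w, hd, h1, h2, h3, h4, rfl⟩)
  · left
    have h1n := h1.ne
    have h1s := h1.symm
    have h2' : ¬ g.Adj w y := fun h => h2 h.symm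
    refine ⟨y, w, u, v, ?_, ?_, h1.ne, h4.symm, h5.symm, ?_⟩
    · rw [swap_adj]; simp [h3]
    · rw [swap_adj]; simp only [ne_eq, Sym2.eq_iff]; grind
    · ext a b
      rw [swap_adj, swap_adj]
      have := fun h : g.Adj a b => h.ne
      simp only [ne_eq, Sym2.eq_iff]
      grind
  · right
    have h1n := h1.symm
    have h1s := h2.symm
    have h3' : ¬ g.Adj y u := fun h => h3 h.symm
    have h4' : ¬ g.Adj w v := fun h => h4 h.symm
    have hd' := hd
    simp at hd'
    obtain ⟨⟨a1, a2, a3⟩, ⟨a4, a5⟩, a6⟩ := hd'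
    refine ⟨u, y, v, w, ?_, ?_, ?_, ?_, ?_, ?_⟩
    · simp; grind
    · rw [exch_adj]; simp [a2]
    · rw [exch_adj]; simp [a5]
    · rw [exch_adj]; simp only [ne_eq, Sym2.eq_iff]; grind
    · rw [exch_adj]; simp only [ne_eq, Sym2.eq_iff]; grind
    · ext a b
      rw [exch_adj, exch_adj]
      have := fun h : g.Adj a b => h.ne
      simp only [ne_eq, Sym2.eq_iff]
      grind

theorem pick_nbr {n : ℕ} (g : SimpleGraph (Fin n)) (T : Finset (Fin n)) (x y : Fin n)
    (hx : x ∈ T) (hy : y ∈ T)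
    (hc : dgT g T x < dgT g T y ∨
      (dgT g T x ≤ dgT g T y ∧ ∃ v ∈ T, g.Adj x v ∧ ¬ g.Adj y v ∧ v ≠ y)) :
    ∃ w ∈ T, g.Adj y w ∧ ¬ g.Adj x w ∧ w ≠ x := by
  classical
  by_contra hcon
  push Not at hcon
  set α : ℤ := if g.Adj x y then 1 else 0 with hα
  have hxy := g.adj_comm x y
  have hx0 := g.irrefl (v := x)
  have hy0 := g.irrefl (v := y)
  have hpt : ∀ b ∈ T, ((if g.Adj y b then 1 else 0) + (if b = y then α else 0) : ℤ)
      ≤ (if g.Adj x b then 1 else 0) + (if b = x then α else 0) := by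
    intro b hb
    have := hcon b hb
    grind
  have e1 : ∑ b ∈ T, ((if g.Adj y b then 1 else 0) + (if b = y then α else 0) : ℤ)
      = dgT g T y + α := by
    rw [Finset.sum_add_distrib, Finset.sum_ite_eq', if_pos hy]; rfl
  have e2 : ∑ b ∈ T, ((if g.Adj x b then 1 else 0) + (if b = x then α else 0) : ℤ)
      = dgT g T x + α := by
    rw [Finset.sum_add_distrib, Finset.sum_ite_eq', if_pos hx]; rfl
  rcases hc with hc | ⟨hc, v, hv, h1, h2, h3⟩
  · have := Finset.sum_le_sum hpt
    linarith
  · have := Finset.sum_lt_sum hpt ⟨v, hv, by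
      have := h1.ne
      grind⟩
    linarith

/-- One improvement step for graphs with equal degrees. -/
theorem match_step {n k : ℕ} (z : Fin n → Fin k) (T : Finset (Fin n)) (v : Fin n) (hv : v ∈ T)
    (g h : SimpleGraph (Fin n))
    (hag : ∀ a b, ¬ (a ∈ T ∧ b ∈ T) → (g.Adj a b ↔ h.Adj a b)) (x y : Fin n)
    (hx : g.Adj v x) (hx' : ¬ h.Adj v x) (hy : h.Adj v y) (hy' : ¬ g.Adj v y)
    (hle : dgT g T x ≤ dgT g T y) :
    ∃ g', addStep z g g' ∧ (∀ a, dgT g' Finset.univ a = dgT g Finset.univ a) ∧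
      (∀ a b, ¬ (a ∈ T ∧ b ∈ T) → (g'.Adj a b ↔ h.Adj a b)) ∧
      {b | ¬ (g'.Adj v b ↔ h.Adj v b)} ⊂ {b | ¬ (g.Adj v b ↔ h.Adj v b)} := by
  have hxT : x ∈ T := by
    by_contra hc; exact hx' ((hag v x (by tauto)).1 hx)
  have hyT : y ∈ T := by
    by_contra hc; exact hy' ((hag v y (by tauto)).2 hy)
  obtain ⟨w, hwT, h1, h2, h3⟩ := pick_nbr g T x y hxT hyT
    (Or.inr ⟨hle, v, hv, hx.symm, fun h => hy' h.symm, hy.ne⟩)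
  have n1 := hx.ne
  have n2 := hy.ne
  have n3 : v ≠ w := by rintro rfl; exact hy' h1.symm
  have n4 : x ≠ y := by rintro rfl; exact hy' hx
  have n5 := h1.ne
  have hd : [v, x, y, w].Pairwise (· ≠ ·) := by
    simp; grind
  refine ⟨_, Or.inr ⟨v, x, y, w, hd, hx, h1, hy', h2, rfl⟩,
    fun a => dg_exch g v x y w a hd hx h1 hy' h2, ?_, ?_⟩
  · intro a b hab
    rw [exch_adj, ← hag a b hab]
    have := fun h : g.Adj a b => h.ne
    simp only [ne_eq, Sym2.eq_iff]
    grind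
  · rw [Set.ssubset_iff_of_subset]
    · refine ⟨x, by simp [hx, hx'], ?_⟩
      simp only [Set.mem_ofPred_eq, exch_adj, ne_eq, Sym2.eq_iff]
      grind
    · intro b
      have := fun h : g.Adj v b => h.ne
      simp only [Set.mem_ofPred_eq, exch_adj, ne_eq, Sym2.eq_iff]
      grind

theorem exists_diff {n : ℕ} (g h : SimpleGraph (Fin n)) (v : Fin n)
    (hd : dgT g Finset.univ v = dgT h Finset.univ v) (hne : ∃ b, ¬ (g.Adj v b ↔ h.Adj v b)) :
    ∃ x, g.Adj v x ∧ ¬ h.Adj v x := by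
  classical
  by_contra hcon
  push Not at hcon
  obtain ⟨b, hb⟩ := hne
  have : dgT g Finset.univ v < dgT h Finset.univ v := by
    unfold dgT
    refine Finset.sum_lt_sum (fun c _ => ?_) ⟨b, Finset.mem_univ _, ?_⟩
    · have := hcon c; grind
    · have := hcon b; grind
  omega

theorem dgT_restrict {n : ℕ} (g h : SimpleGraph (Fin n)) (T : Finset (Fin n)) (a : Fin n)
    (hd : dgT g Finset.univ a = dgT h Finset.univ a)
    (hag : ∀ a b, ¬ (a ∈ T ∧ b ∈ T) → (g.Adj a b ↔ h.Adj a b)) : dgT g T a = dgT h T a := by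
  classical
  unfold dgT at *
  rw [← Finset.sum_add_sum_compl T, ← Finset.sum_add_sum_compl T] at hd
  have : (∑ b ∈ Tᶜ, if g.Adj a b then (1 : ℤ) else 0) = ∑ b ∈ Tᶜ, if h.Adj a b then 1 else 0 := by
    refine Finset.sum_congr rfl fun b hb => ?_
    rw [if_congr (hag a b (by simp at hb; tauto)) rfl rfl]
  linarith

theorem reach_of_deg {n k : ℕ} (z : Fin n → Fin k) (T : Finset (Fin n)) :
    ∀ g h : SimpleGraph (Fin n), (∀ a, dgT g Finset.univ a = dgT h Finset.univ a) →
      (∀ a b, ¬ (a ∈ T ∧ b ∈ T) → (g.Adj a b ↔ h.Adj a b)) →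
      Relation.ReflTransGen (addStep z) g h := by
  classical
  induction T using Finset.induction_on with
  | empty =>
    intro g h _ hag
    have : g = h := by ext a b; exact hag a b (by simp)
    rw [this]
  | insert v T hvT ih =>
    have main : ∀ N : ℕ, ∀ g h : SimpleGraph (Fin n),
        {b | ¬ (g.Adj v b ↔ h.Adj v b)}.ncard = N →
        (∀ a, dgT g Finset.univ a = dgT h Finset.univ a) →
        (∀ a b, ¬ (a ∈ insert v T ∧ b ∈ insert v T) → (g.Adj a b ↔ h.Adj a b)) →
        Relation.ReflTransGen (addStep z) g h := by
      intro N
      induction N using Nat.strong_induction_on with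
      | _ N ihN =>
        intro g h hN hdeg hag
        by_cases hne : ∃ b, ¬ (g.Adj v b ↔ h.Adj v b)
        · obtain ⟨x, hx, hx'⟩ := exists_diff g h v (hdeg v) hne
          obtain ⟨y, hy, hy'⟩ := exists_diff h g v (hdeg v).symm (by
            obtain ⟨b, hb⟩ := hne; exact ⟨b, by tauto⟩)
          have hvi := Finset.mem_insert_self v T
          rcases le_total (dgT g (insert v T) x) (dgT g (insert v T) y) with hle | hle
          · obtain ⟨g', s1, s2, s3, s4⟩ := match_step z _ v hvi g h hag x y hx hx' hy hy' hle
            exact Relation.ReflTransGen.head s1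
              (ihN _ (hN ▸ Set.ncard_lt_ncard s4 (Set.toFinite _)) g' h rfl
                (fun a => (s2 a).trans (hdeg a)) s3)
          · rw [dgT_restrict g h _ x (hdeg x) hag, dgT_restrict g h _ y (hdeg y) hag] at hle
            obtain ⟨h', s1, s2, s3, s4⟩ := match_step z _ v hvi h g
              (fun a b hab => (hag a b hab).symm) y x hy hy' hx hx' hle
            have e : ∀ p q : SimpleGraph (Fin n), {b | ¬ (p.Adj v b ↔ q.Adj v b)}
                = {b | ¬ (q.Adj v b ↔ p.Adj v b)} := by
              intro p q; ext b; simp only [Set.mem_ofPred_eq]; tauto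
            rw [e h' g, e h g] at s4
            exact Relation.ReflTransGen.tail
              (ihN _ (hN ▸ Set.ncard_lt_ncard s4 (Set.toFinite _)) g h' rfl
                (fun a => (hdeg a).trans (s2 a).symm) (fun a b hab => (s3 a b hab).symm))
              (addStep_symm z s1)
        · push Not at hne
          refine ih g h hdeg fun a b hab => ?_
          by_cases hav : a = v
          · rw [hav]; exact hne b
          by_cases hbv : b = v
          · rw [hbv, g.adj_comm, h.adj_comm]; exact hne a
          · exact hag a b (by simp [hav, hbv]; tauto)
    intro g h
    exact main _ g h rfl

/-- Moving an edge end within a block brings the degrees of `g` closer to those of `h`. -/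
theorem level_step {n k : ℕ} (z : Fin n → Fin k) (g h : SimpleGraph (Fin n)) (p q : Fin n)
    (hz : z p = z q) (hp : dgT h Finset.univ p < dgT g Finset.univ p)
    (hq : dgT g Finset.univ q < dgT h Finset.univ q)
    (hpq : dgT g Finset.univ q < dgT g Finset.univ p) :
    ∃ g', addStep z g g' ∧
      ∑ a, (dgT g' Finset.univ a - dgT h Finset.univ a).natAbs
        < ∑ a, (dgT g Finset.univ a - dgT h Finset.univ a).natAbs := by
  obtain ⟨x, -, h1, h2, h3⟩ := pick_nbr g Finset.univ q p (Finset.mem_univ _) (Finset.mem_univ _)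
    (Or.inl hpq)
  refine ⟨_, Or.inl ⟨p, x, q, x, h1, h2, h3.symm, hz, rfl, rfl⟩, ?_⟩
  have hpq' : p ≠ q := by rintro rfl; omega
  refine Finset.sum_lt_sum (fun a _ => ?_) ⟨p, Finset.mem_univ _, ?_⟩
  · rw [dg_swap g p x q x a h1 h2 h3.symm]
    by_cases ha : a = p
    · subst ha; simp [hpq']; omega
    · by_cases hb : a = q
      · subst hb; simp [ha]; omega
      · simp [ha, hb]
  · rw [dg_swap g p x q x p h1 h2 h3.symm]
    simp [hpq']; omega

theorem exists_excess {n k : ℕ} (z : Fin n → Fin k) (g h : SimpleGraph (Fin n)) (i : Fin k)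
    (hs : addStat z g i = addStat z h i) (c : Fin n) (hc : z c = i)
    (hne : dgT g Finset.univ c ≠ dgT h Finset.univ c) :
    ∃ p, z p = i ∧ dgT h Finset.univ p < dgT g Finset.univ p := by
  by_contra hcon
  push Not at hcon
  have hs' : (addStat z g i : ℤ) = addStat z h i := by exact_mod_cast hs
  rw [addStat_eq_dgT, addStat_eq_dgT] at hs'
  exact hne ((Finset.sum_eq_sum_iff_of_le (fun a ha => hcon a (by simpa using ha))).1 hs' c
    (by simpa using hc))

theorem reach_of_stat {n k : ℕ} (z : Fin n → Fin k) : ∀ N : ℕ, ∀ g h : SimpleGraph (Fin n),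
    ∑ a, (dgT g Finset.univ a - dgT h Finset.univ a).natAbs = N →
    (∀ i, addStat z g i = addStat z h i) → Relation.ReflTransGen (addStep z) g h := by
  intro N
  induction N using Nat.strong_induction_on with
  | _ N ih =>
    intro g h hN hs
    by_cases hdeg : ∀ a, dgT g Finset.univ a = dgT h Finset.univ a
    · exact reach_of_deg z Finset.univ g h hdeg (by simp)
    · push Not at hdeg
      obtain ⟨c, hc⟩ := hdeg
      obtain ⟨p, hzp, hp⟩ := exists_excess z g h (z c) (hs _) c rfl hc
      obtain ⟨q, hzq, hq⟩ := exists_excess z h g (z c) (hs _).symm c rfl hc.symm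
      by_cases hpq : dgT g Finset.univ q < dgT g Finset.univ p
      · obtain ⟨g', s1, s2⟩ := level_step z g h p q (hzp.trans hzq.symm) hp hq hpq
        exact Relation.ReflTransGen.head s1 (ih _ (hN ▸ s2) g' h rfl
          fun i => (addStep_stat z g g' s1 i).symm.trans (hs i))
      · obtain ⟨h', s1, s2⟩ := level_step z h g q p (hzq.trans hzp.symm) hq hp (by omega)
        have e : ∀ r s : SimpleGraph (Fin n),
            ∑ a, (dgT r Finset.univ a - dgT s Finset.univ a).natAbs
              = ∑ a, (dgT s Finset.univ a - dgT r Finset.univ a).natAbs := fun r s =>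
          Finset.sum_congr rfl fun a _ => by omega
        rw [e h' g, e h g] at s2
        exact Relation.ReflTransGen.tail (ih _ (hN ▸ s2) g h' rfl
          fun i => (hs i).trans (addStep_stat z h h' s1 i)) (addStep_symm z s1)

theorem stmt9 {n k : ℕ} (z : Fin n → Fin k) (g h : SimpleGraph (Fin n)) :
    (∀ i, addStat z g i = addStat z h i) ↔ Relation.ReflTransGen (addStep z) g h := by
  constructor
  · exact reach_of_stat z _ g h rfl
  · intro hr i
    induction hr with
    | refl => rfl
    | tail _ hs ih => exact ih.trans (addStep_stat z _ _ hs i)
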